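/- Let Z : ℝ^N → ℝ be C², Z be stationary with finite expected number of critical points, A invertible, and X(t) = Z(At). Then E[μ_i^X(D,u)] = |det A| · E[μ_i^Z(D,u)] for every measurable bounded D ⊆ ℝ^N, where μ_i^g(D,u) counts critical points of index i of g in D with value ≥ u. -/

import Mathlib

open MeasureTheory Matrix

/-- The index of a real-valued form `Q` on `Fin N → ℝ`. -/
noncomputable def negIdx {N : ℕ} (Q : (Fin N → ℝ) → ℝ) : ℕ :=
  sSup {d : ℕ | ∃ V : Submodule ℝ (Fin N → ℝ),
    Module.finrank ℝ V = d ∧ ∀ x ∈ V, x ≠ 0 → Q x < 0}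

/-- The set of critical points of index `i` with value `≥ u` of `F` inside `D`. -/
def critSet {N : ℕ} (F : (Fin N → ℝ) → ℝ) (D : Set (Fin N → ℝ)) (u : ℝ) (i : ℕ) :
    Set (Fin N → ℝ) :=
  {t | t ∈ D ∧ F t ≥ u ∧ fderiv ℝ F t = 0 ∧
    negIdx (fun v => iteratedFDeriv ℝ 2 F t ![v, v]) = i}

/-!
The diffeomorphism `t ↦ A t` maps the critical points of `X = Z ∘ A` of index `i` above `u` in `D`
bijectively onto those of `Z` in `A D`: gradients are transported by the transpose of `A` and
Hessians by congruence, which preserves the index. Stationarity makes the intensity measure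
`B ↦ E[μ_i^Z(B, u)]` translation invariant. Its finiteness on one compact set with nonempty interior
gives finiteness on all compact sets, so it is a multiple of Lebesgue measure, which `A` scales by
`|det A|`.

The delicate point is that `μ_i^Z(·, u)` is a random measure at all. The number of points of a
random set is determined by which closed sets the random set meets. Critical points are the points
where the continuous 2-jet of `Z` lies in a locally closed set, because the index is lower
semicontinuous in the Hessian; and a continuous map on a compact set hits a closed set exactly when
its infimal distance to it, computed over a countable dense subset, vanishes. Passing from compact
sets to Borel sets needs the counting measures to be locally finite, which holds almost surely by
the finite intensity.
-/

section Counting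

open TopologicalSpace Metric

theorem natCast_le_encard_iff {X : Type*} [TopologicalSpace X] [T3Space X]
    {B : Set (Set X)} (hB : IsTopologicalBasis B) {T : Set X} {n : ℕ} :
    (n : ℕ∞) ≤ T.encard ↔ ∃ F : Finset B, F.card = n ∧
      (F : Set B).PairwiseDisjoint (fun b => closure (b : Set X)) ∧
      ∀ b ∈ F, (T ∩ closure (b : Set X)).Nonempty := by
  classical
  constructor
  · intro hn
    obtain ⟨S, hST, hSn⟩ := Set.exists_subset_encard_eq hn
    have hS : S.Finite := Set.finite_of_encard_eq_coe hSn
    obtain ⟨U, hU, hUd⟩ := hS.t2_separation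
    choose b hbB hxb hbU using fun x =>
      hB.exists_closure_subset ((hU x).2.mem_nhds (hU x).1)
    have hmem : ∀ x, x ∈ closure (b x) := fun x => subset_closure (hxb x)
    have hd : S.PairwiseDisjoint fun x => closure (b x) :=
      hUd.mono_on fun x _ => hbU x
    let c : X → B := fun x => ⟨b x, hbB x⟩
    have hc : Set.InjOn c S := fun x hx z hz hxz =>
      hd.elim_set hx hz x (hmem x) ((Subtype.mk_eq_mk.1 hxz : b x = b z) ▸ hmem x)
    refine ⟨hS.toFinset.image c, ?_, ?_, ?_⟩
    · rw [Finset.card_image_of_injOn (by simpa using hc), ← Nat.cast_inj (R := ℕ∞), ← hSn,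
        hS.encard_eq_coe_toFinset_card]
    · rw [Finset.coe_image, hS.coe_toFinset, hc.pairwiseDisjoint_image]
      exact hd
    · simp only [Finset.forall_mem_image, hS.mem_toFinset]
      exact fun x hx => ⟨x, hST hx, hmem x⟩
  · rintro ⟨F, rfl, hd, hF⟩
    choose x hxT hxb using fun b : F => hF b b.2
    have hx : Function.Injective x := fun a b hab =>
      Subtype.ext (hd.elim_set a.2 b.2 (x a) (hxb a) (hab ▸ hxb b))
    calc (F.card : ℕ∞) = (Set.range x).encard := by
          rw [← Set.image_univ, hx.encard_image]; simp
      _ ≤ T.encard := Set.encard_le_encard (Set.range_subset_iff.2 hxT)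

theorem measurable_encard_of_measurableSet_hit {Y X : Type*} [MeasurableSpace Y]
    [TopologicalSpace X] [SecondCountableTopology X] [T3Space X]
    {T : Y → Set X}
    (hT : ∀ F, IsClosed F → MeasurableSet {y | (T y ∩ F).Nonempty}) :
    Measurable fun y => (T y).encard := by
  have hle (n : ℕ) : MeasurableSet {y | (n : ℕ∞) ≤ (T y).encard} := by
    simp only [natCast_le_encard_iff (isBasis_countableBasis X), Set.ofPred_exists,
      Set.ofPred_and, Set.ofPred_forall]
    have := (countable_countableBasis X).to_subtype
    exact .iUnion fun F => (MeasurableSet.const _).inter <| (MeasurableSet.const _).inter <|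
      .iInter fun b => .iInter fun _ => hT _ isClosed_closure
  refine ENat.measurable_iff.2 fun n => ?_
  convert (hle n).diff (hle (n + 1)) using 1
  ext y
  simp only [Set.mem_preimage, Set.mem_singleton_iff, Set.mem_sdiff, Set.mem_ofPred_eq]
  rw [Nat.cast_add_one, ENat.add_one_le_iff (ENat.natCast_ne_top n), not_lt]
  exact ⟨fun h => ⟨h.ge, h.le⟩, fun h => le_antisymm h.2 h.1⟩

theorem exists_mem_isCompact_iff_biInf_infEDist_eq_zero {E J : Type*} [TopologicalSpace E]
    [PseudoEMetricSpace J] {φ : E → J} (hφ : Continuous φ) {K Q : Set E} (hK : IsCompact K)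
    (hQK : Q ⊆ K) (hKQ : K ⊆ closure Q) {C : Set J} (hC : IsClosed C) :
    (∃ t ∈ K, φ t ∈ C) ↔ ⨅ q ∈ Q, infEDist (φ q) C = 0 := by
  have hcont : Continuous fun t => infEDist (φ t) C := continuous_infEDist.comp hφ
  constructor
  · rintro ⟨t, htK, htC⟩
    refine le_antisymm (le_of_forall_gt fun ε hε => ?_) bot_le
    have ht : infEDist (φ t) C < ε := by rwa [infEDist_zero_of_mem htC]
    obtain ⟨q, hqε, hqQ⟩ :=
      mem_closure_iff.1 (hKQ htK) _ (isOpen_lt hcont continuous_const) ht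
    exact (biInf_le _ hqQ).trans_lt hqε
  · intro h0
    have hQ : Q.Nonempty := by
      by_contra! hQ
      simp [hQ] at h0
    obtain ⟨t, htK, htmin⟩ := hK.exists_isMinOn (hQ.mono hQK) hcont.continuousOn
    refine ⟨t, htK, (mem_iff_infEDist_zero_of_closed hC).2 (le_antisymm ?_ bot_le)⟩
    exact h0 ▸ le_iInf₂ fun q hq => htmin (hQK hq)

section RandomMap

variable {Y E J : Type*} [MeasurableSpace Y] [TopologicalSpace E] [PseudoMetrizableSpace E]
  [SecondCountableTopology E] [PseudoEMetricSpace J] [MeasurableSpace J] [BorelSpace J]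
  {Ψ : Y → E → J}

theorem measurableSet_exists_mem_isClosed (hΨ : ∀ t, Measurable fun y => Ψ y t)
    (hΨc : ∀ y, Continuous (Ψ y)) {K : Set E} (hK : IsCompact K) {C : Set J} (hC : IsClosed C) :
    MeasurableSet {y | ∃ t ∈ K, Ψ y t ∈ C} := by
  obtain ⟨Q, hQK, hQ, hKQ⟩ :=
    (IsSeparable.of_separableSpace K).exists_countable_dense_subset
  simp only [fun y => exists_mem_isCompact_iff_biInf_infEDist_eq_zero (hΨc y) hK hQK hKQ hC]
  exact (Measurable.biInf Q hQ fun q _ => measurable_infEDist.comp (hΨ q))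
    (measurableSet_singleton 0)

theorem measurableSet_exists_mem_isLocallyClosed (hΨ : ∀ t, Measurable fun y => Ψ y t)
    (hΨc : ∀ y, Continuous (Ψ y)) {K : Set E} (hK : IsCompact K) {S : Set J}
    (hS : IsLocallyClosed S) :
    MeasurableSet {y | ∃ t ∈ K, Ψ y t ∈ S} := by
  obtain ⟨U, C, hU, hC, rfl⟩ := hS
  obtain ⟨F, hF, -, rfl, -⟩ := hU.exists_iUnion_isClosed
  have hunion : {y | ∃ t ∈ K, Ψ y t ∈ (⋃ n, F n) ∩ C} =
      ⋃ n, {y | ∃ t ∈ K, Ψ y t ∈ F n ∩ C} := by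
    ext y
    simp only [Set.iUnion_inter, Set.mem_iUnion, Set.mem_ofPred_eq]
    tauto
  rw [hunion]
  exact .iUnion fun n => measurableSet_exists_mem_isClosed hΨ hΨc hK ((hF n).inter hC)

theorem measurable_encard_setOf_mem_isLocallyClosed [T2Space E]
    (hΨ : ∀ t, Measurable fun y => Ψ y t) (hΨc : ∀ y, Continuous (Ψ y)) {K : Set E}
    (hK : IsCompact K) {S : Set J} (hS : IsLocallyClosed S) :
    Measurable fun y => {t ∈ K | Ψ y t ∈ S}.encard := by
  refine measurable_encard_of_measurableSet_hit fun F hF => ?_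
  convert measurableSet_exists_mem_isLocallyClosed hΨ hΨc (hK.inter_right hF) hS using 3
  exact exists_congr fun t => and_right_comm

end RandomMap

theorem count_apply_eq_encard {X : Type*} [MeasurableSpace X] [MeasurableSingletonClass X]
    (s : Set X) : Measure.count s = s.encard := by
  rcases s.finite_or_infinite with hs | hs
  · rw [Measure.count_apply_finite s hs, hs.encard_eq_coe_toFinset_card, ENat.toENNReal_coe]
  · rw [Measure.count_apply_infinite hs, hs.encard_eq, ENat.toENNReal_top]

end Counting

section RandomMeasure

open Topology

theorem measurable_measure_of_isCompact {Y X : Type*} [MeasurableSpace Y] [TopologicalSpace X]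
    [T2Space X] [SigmaCompactSpace X] [MeasurableSpace X] [BorelSpace X] {ν : Y → Measure X}
    (hfin : ∀ y, IsFiniteMeasureOnCompacts (ν y))
    (hν : ∀ K, IsCompact K → Measurable fun y => ν y K) : Measurable ν := by
  have hK (n : ℕ) : IsCompact (compactCovering X n) := isCompact_compactCovering X n
  have hrestrict (n : ℕ) : Measurable fun y => (ν y).restrict (compactCovering X n) := by
    have (y : Y) : IsFiniteMeasure ((ν y).restrict (compactCovering X n)) :=
      ⟨by simpa using (hK n).measure_lt_top⟩
    refine Measurable.measure_of_isPiSystem (S := {F | IsClosed F})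
      (BorelSpace.measurable_eq.trans borel_eq_generateFrom_isClosed) isPiSystem_isClosed
      (fun F hF => ?_) (by simpa using hν _ (hK n))
    simpa only [Measure.restrict_apply (IsClosed.measurableSet hF)] using
      hν _ ((hK n).inter_left hF)
  refine Measure.measurable_of_measurable_coe _ fun D hD => ?_
  have hexhaust (y : Y) : ν y D = ⨆ n, (ν y).restrict (compactCovering X n) D := by
    have hmono : Monotone (compactCovering X) := fun _ _ h => compactCovering_subset X h
    rw [← Measure.restrict_iUnion_apply_eq_iSup hmono.directed_le hD,
      iUnion_compactCovering, Measure.restrict_univ]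
  simp only [hexhaust]
  exact .iSup fun n => Measure.measurable_coe hD |>.comp (hrestrict n)

theorem aemeasurable_measure_of_isCompact {Y X : Type*} [MeasurableSpace Y] [TopologicalSpace X]
    [T2Space X] [SigmaCompactSpace X] [MeasurableSpace X] [BorelSpace X] {μ : Measure Y}
    {ν : Y → Measure X} (hfin : ∀ᵐ y ∂μ, IsFiniteMeasureOnCompacts (ν y))
    (hν : ∀ K, IsCompact K → Measurable fun y => ν y K) : AEMeasurable ν μ := by
  obtain ⟨G, hGμ, hG, hGfin⟩ := hfin.exists_measurable_mem
  refine ⟨G.indicator ν, measurable_measure_of_isCompact (fun y => ?_) fun K hK => ?_,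
    Filter.mem_of_superset hGμ fun y hy => (Set.indicator_of_mem hy ν).symm⟩
  · by_cases hy : y ∈ G
    · simpa [hy] using hGfin y hy
    · simp only [hy, not_false_eq_true, Set.indicator_of_notMem]
      infer_instance
  · convert (hν K hK).indicator hG using 2 with y
    by_cases hy : y ∈ G <;> simp [hy]

section Equivariant

variable {Y G : Type*} [MeasurableSpace Y] [AddGroup G] [TopologicalSpace G]
  [IsTopologicalAddGroup G] [MeasurableSpace G] [BorelSpace G] {μ : Measure Y}
  {τ : G → Y → Y} {M : Y → Measure G}

theorem ae_measure_translate_lt_top (hτ : ∀ g, MeasurePreserving (τ g) μ μ)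
    (hM : ∀ g y, M (τ g y) = (M y).map (g + ·)) {V : Set G} (hV : Measurable fun y => M y V)
    (hfin : ∫⁻ y, M y V ∂μ ≠ ⊤) (g : G) : ∀ᵐ y ∂μ, M y ((g + ·) ⁻¹' V) < ⊤ := by
  filter_upwards [(hτ g).quasiMeasurePreserving.ae (ae_lt_top hV hfin)] with y hy
  rwa [hM, (measurableEmbedding_addLeft g).map_apply] at hy

theorem ae_isFiniteMeasureOnCompacts_of_equivariant [WeaklyLocallyCompactSpace G]
    [SigmaCompactSpace G] (hτ : ∀ g, MeasurePreserving (τ g) μ μ)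
    (hM : ∀ g y, M (τ g y) = (M y).map (g + ·)) {V : Set G} (hV : Measurable fun y => M y V)
    (hVint : (interior V).Nonempty) (hfin : ∫⁻ y, M y V ∂μ ≠ ⊤) :
    ∀ᵐ y ∂μ, IsFiniteMeasureOnCompacts (M y) := by
  let K : CompactExhaustion G := .choice G
  have hK (n : ℕ) : ∀ᵐ y ∂μ, M y (K n) < ⊤ := by
    obtain ⟨t, ht⟩ := compact_covered_by_add_left_translates (K.isCompact n) hVint
    have htrans : ∀ᵐ y ∂μ, ∀ g ∈ t, M y ((g + ·) ⁻¹' V) < ⊤ :=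
      (Finset.eventually_all t).2 fun g _ => ae_measure_translate_lt_top hτ hM hV hfin g
    filter_upwards [htrans] with y hy
    exact (measure_mono ht).trans_lt (measure_biUnion_lt_top t.finite_toSet hy)
  filter_upwards [ae_all_iff.2 hK] with y hy
  refine ⟨fun C hC => ?_⟩
  obtain ⟨n, hn⟩ := K.exists_superset_of_isCompact hC
  exact (measure_mono hn).trans_lt (hy n)

theorem aemeasurable_of_equivariant [T2Space G] [WeaklyLocallyCompactSpace G]
    [SigmaCompactSpace G] (hτ : ∀ g, MeasurePreserving (τ g) μ μ)
    (hM : ∀ g y, M (τ g y) = (M y).map (g + ·))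
    (hMm : ∀ K, IsCompact K → Measurable fun y => M y K) {V : Set G} (hV : IsCompact V)
    (hVint : (interior V).Nonempty) (hfin : ∫⁻ y, M y V ∂μ ≠ ⊤) : AEMeasurable M μ :=
  aemeasurable_measure_of_isCompact
    (ae_isFiniteMeasureOnCompacts_of_equivariant hτ hM (hMm V hV) hVint hfin) hMm

theorem isAddLeftInvariant_bind_of_equivariant (hτ : ∀ g, MeasurePreserving (τ g) μ μ)
    (hM : ∀ g y, M (τ g y) = (M y).map (g + ·)) (hMm : AEMeasurable M μ) :
    (μ.bind M).IsAddLeftInvariant := by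
  refine ⟨fun g => Measure.ext fun D hD => ?_⟩
  have hMD : AEMeasurable (fun y => M y D) μ := (Measure.measurable_coe hD).comp_aemeasurable hMm
  have hgD : MeasurableSet ((g + ·) ⁻¹' D) := measurable_const_add g hD
  calc (μ.bind M).map (g + ·) D = ∫⁻ y, M (τ g y) D ∂μ := by
        simp only [Measure.map_apply (measurable_const_add g) hD, Measure.bind_apply hgD hMm, hM]
    _ = ∫⁻ y, M y D ∂μ := by
        conv_rhs => rw [← (hτ g).map_eq, lintegral_map' (by rwa [(hτ g).map_eq])
          (hτ g).aemeasurable]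
    _ = μ.bind M D := (Measure.bind_apply hD hMm).symm

end Equivariant

theorem measure_image_linearMap {E : Type*} [NormedAddCommGroup E] [NormedSpace ℝ E]
    [FiniteDimensional ℝ E] [MeasurableSpace E] [BorelSpace E] (ζ : Measure E)
    [ζ.IsAddLeftInvariant] [IsFiniteMeasureOnCompacts ζ] (L : E →ₗ[ℝ] E) (D : Set E) :
    ζ (L '' D) = ENNReal.ofReal |LinearMap.det L| * ζ D := by
  rw [Measure.isAddLeftInvariant_eq_smul ζ Measure.addHaar, Measure.smul_apply,
    Measure.smul_apply, Measure.addHaar_image_linearMap, mul_smul_comm]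

theorem lintegral_measure_image_of_equivariant {Y E : Type*} [MeasurableSpace Y]
    [NormedAddCommGroup E] [NormedSpace ℝ E] [FiniteDimensional ℝ E] [MeasurableSpace E]
    [BorelSpace E] {μ : Measure Y} {τ : E → Y → Y} {M : Y → Measure E}
    (hτ : ∀ g, MeasurePreserving (τ g) μ μ) (hM : ∀ g y, M (τ g y) = (M y).map (g + ·))
    (hMm : AEMeasurable M μ) {V : Set E} (hV : MeasurableSet V) (hVint : (interior V).Nonempty)
    (hfin : ∫⁻ y, M y V ∂μ ≠ ⊤) (L : E ≃L[ℝ] E) {D : Set E} (hD : MeasurableSet D) :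
    ∫⁻ y, M y (L '' D) ∂μ =
      ENNReal.ofReal |LinearMap.det (L : E →ₗ[ℝ] E)| * ∫⁻ y, M y D ∂μ := by
  have hinv := isAddLeftInvariant_bind_of_equivariant hτ hM hMm
  have hfinite : IsFiniteMeasureOnCompacts (μ.bind M) := ⟨fun K hK =>
    measure_lt_top_of_isCompact_of_isAddLeftInvariant' hVint
      (by rwa [Measure.bind_apply hV hMm]) hK⟩
  have hLD : MeasurableSet (L '' D) := L.toHomeomorph.measurableEmbedding.measurableSet_image.2 hD
  rw [← Measure.bind_apply hLD hMm, ← Measure.bind_apply hD hMm]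
  exact measure_image_linearMap (μ.bind M) _ D

end RandomMeasure

section Index

open Topology

theorem le_negIdx_iff {N : ℕ} (Q : (Fin N → ℝ) → ℝ) (k : ℕ) :
    k ≤ negIdx Q ↔ ∃ V : Submodule ℝ (Fin N → ℝ),
      k ≤ Module.finrank ℝ V ∧ ∀ x ∈ V, x ≠ 0 → Q x < 0 := by
  let S : Set ℕ := {d | ∃ V : Submodule ℝ (Fin N → ℝ),
    Module.finrank ℝ V = d ∧ ∀ x ∈ V, x ≠ 0 → Q x < 0}
  have hne : S.Nonempty := ⟨0, ⊥, finrank_bot ℝ _, fun x hx hx0 => absurd hx hx0⟩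
  have hbdd : BddAbove S := by
    refine ⟨N, ?_⟩
    rintro _ ⟨V, rfl, -⟩
    simpa using V.finrank_le
  constructor
  · intro hk
    obtain ⟨V, hV, hQ⟩ := Nat.sSup_mem hne hbdd
    exact ⟨V, hk.trans hV.ge, hQ⟩
  · rintro ⟨V, hk, hQ⟩
    exact hk.trans (le_csSup hbdd ⟨V, rfl, hQ⟩)

theorem negIdx_le_negIdx_comp {N : ℕ} (Q : (Fin N → ℝ) → ℝ)
    (L : (Fin N → ℝ) ≃ₗ[ℝ] (Fin N → ℝ)) : negIdx Q ≤ negIdx (Q ∘ L) := by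
  obtain ⟨V, hV, hQ⟩ := (le_negIdx_iff Q _).1 le_rfl
  refine (le_negIdx_iff _ _).2 ⟨V.map (L.symm : (Fin N → ℝ) →ₗ[ℝ] (Fin N → ℝ)),
    by rwa [LinearEquiv.finrank_map_eq], ?_⟩
  rintro _ ⟨x, hx, rfl⟩ hx0
  simpa using hQ x hx fun h => hx0 (by simp [h])

theorem negIdx_comp {N : ℕ} (Q : (Fin N → ℝ) → ℝ) (L : (Fin N → ℝ) ≃ₗ[ℝ] (Fin N → ℝ)) :
    negIdx (Q ∘ L) = negIdx Q := by
  refine le_antisymm ?_ (negIdx_le_negIdx_comp Q L)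
  have hcomp : (Q ∘ L) ∘ L.symm = Q := funext fun v => congrArg Q (L.apply_symm_apply v)
  exact (negIdx_le_negIdx_comp (Q ∘ L) L.symm).trans_eq (congrArg negIdx hcomp)

theorem forall_mem_neg_iff_forall_mem_sphere {E : Type*} [NormedAddCommGroup E]
    [NormedSpace ℝ E] {Q : E → ℝ} (hQ : ∀ (a : ℝ) v, Q (a • v) = a ^ 2 * Q v)
    (V : Submodule ℝ E) :
    (∀ x ∈ V, x ≠ 0 → Q x < 0) ↔ ∀ x ∈ Metric.sphere 0 1 ∩ (V : Set E), Q x < 0 := by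
  constructor
  · exact fun h x hx => h x hx.2 (ne_zero_of_mem_unit_sphere ⟨x, hx.1⟩)
  · intro h x hx hx0
    have hunit : ‖x‖⁻¹ • x ∈ Metric.sphere (0 : E) 1 := by simp [norm_smul, hx0]
    have hneg := h _ ⟨hunit, V.smul_mem _ hx⟩
    rw [hQ] at hneg
    exact (pos_iff_neg_of_mul_neg hneg).1 (by positivity)

theorem lowerSemicontinuous_negIdx {X : Type*} [TopologicalSpace X] {N : ℕ}
    {Q : X → (Fin N → ℝ) → ℝ} (hQc : Continuous fun p : X × (Fin N → ℝ) => Q p.1 p.2)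
    (hQ : ∀ x (a : ℝ) v, Q x (a • v) = a ^ 2 * Q x v) :
    LowerSemicontinuous fun x => negIdx (Q x) := by
  intro x k hk
  obtain ⟨V, hV, hneg⟩ := (le_negIdx_iff (Q x) (k + 1)).1 hk
  rw [forall_mem_neg_iff_forall_mem_sphere (hQ x)] at hneg
  have hcompact : IsCompact (Metric.sphere 0 1 ∩ (V : Set (Fin N → ℝ))) :=
    (isCompact_sphere 0 1).inter_right V.closed_of_finiteDimensional
  have hnear : ∀ᶠ y in 𝓝 x, ∀ v ∈ Metric.sphere 0 1 ∩ (V : Set (Fin N → ℝ)), Q y v < 0 :=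
    hcompact.eventually_forall_of_forall_eventually fun v hv =>
      hQc.continuousAt.eventually_lt_const (hneg v hv)
  filter_upwards [hnear] with y hy
  exact (le_negIdx_iff (Q y) (k + 1)).2
    ⟨V, hV, (forall_mem_neg_iff_forall_mem_sphere (hQ y) V).2 hy⟩

end Index

section Jets

/-- The derivative of `f` at `t` in the direction `v`, taken along the steps `1 / n` so that it
depends measurably on `f` for the `σ`-algebra generated by the evaluations. Its value is junk where
the difference quotients do not converge. -/
noncomputable def seqDirDeriv {E : Type*} [AddCommGroup E] [Module ℝ E] (v : E) (f : E → ℝ)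
    (t : E) : ℝ :=
  Filter.limUnder Filter.atTop fun n : ℕ => (n : ℝ) • (f (t + (n : ℝ)⁻¹ • v) - f t)

theorem measurable_seqDirDeriv {E : Type*} [AddCommGroup E] [Module ℝ E] (v : E) :
    Measurable (seqDirDeriv v) := by
  refine measurable_pi_iff.2 fun t => (StronglyMeasurable.limUnder fun n => ?_).measurable
  have heval (s : E) : Measurable fun f : E → ℝ => f s := measurable_pi_apply s
  exact (((heval _).sub (heval _)).const_smul (n : ℝ)).stronglyMeasurable

theorem seqDirDeriv_eq_fderiv {E : Type*} [NormedAddCommGroup E] [NormedSpace ℝ E] (v : E)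
    {f : E → ℝ} {t : E} (hf : DifferentiableAt ℝ f t) : seqDirDeriv v f t = fderiv ℝ f t v :=
  (hf.hasFDerivAt.lim v (c := fun n : ℕ => (n : ℝ))
    (by simpa using tendsto_natCast_atTop_atTop)).limUnder_eq

theorem seqDirDeriv_seqDirDeriv_eq_fderiv_fderiv {E : Type*} [NormedAddCommGroup E]
    [NormedSpace ℝ E] (v w : E) {f : E → ℝ} (hf : ContDiff ℝ 2 f) (t : E) :
    seqDirDeriv v (seqDirDeriv w f) t = fderiv ℝ (fderiv ℝ f) t v w := by
  have hw : seqDirDeriv w f = fun t => fderiv ℝ f t w :=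
    funext fun t => seqDirDeriv_eq_fderiv w (hf.differentiable two_ne_zero t)
  have hd : DifferentiableAt ℝ (fderiv ℝ f) t :=
    (hf.fderiv_right (m := 1) (by norm_num)).differentiable one_ne_zero t
  have hdw : DifferentiableAt ℝ (fun t => fderiv ℝ f t w) t :=
    hd.clm_apply (differentiableAt_const w)
  rw [hw, seqDirDeriv_eq_fderiv v hdw, fderiv_clm_apply hd (differentiableAt_const w)]
  simp

/-- The 2-jet of `f` at `t`: its value, gradient and Hessian in coordinates. -/
noncomputable def jet {N : ℕ} (f : (Fin N → ℝ) → ℝ) (t : Fin N → ℝ) :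
    ℝ × (Fin N → ℝ) × (Fin N → Fin N → ℝ) :=
  (f t, fun j => seqDirDeriv (Pi.single j 1) f t,
    fun j k => seqDirDeriv (Pi.single j 1) (seqDirDeriv (Pi.single k 1) f) t)

theorem measurable_jet {N : ℕ} (t : Fin N → ℝ) :
    Measurable fun f : (Fin N → ℝ) → ℝ => jet f t := by
  have heval : Measurable fun f : (Fin N → ℝ) → ℝ => f t := measurable_pi_apply t
  have hgrad (j : Fin N) := heval.comp (measurable_seqDirDeriv (Pi.single j 1))
  have hhess (j k : Fin N) := (hgrad j).comp (measurable_seqDirDeriv (Pi.single k 1))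
  exact heval.prodMk ((measurable_pi_iff.2 hgrad).prodMk
    (measurable_pi_iff.2 fun j => measurable_pi_iff.2 (hhess j)))

theorem jet_eq_fderiv {N : ℕ} {f : (Fin N → ℝ) → ℝ} (hf : ContDiff ℝ 2 f) (t : Fin N → ℝ) :
    jet f t = (f t, fun j => fderiv ℝ f t (Pi.single j 1),
      fun j k => fderiv ℝ (fderiv ℝ f) t (Pi.single j 1) (Pi.single k 1)) := by
  simp only [jet, seqDirDeriv_eq_fderiv _ (hf.differentiable two_ne_zero t),
    seqDirDeriv_seqDirDeriv_eq_fderiv_fderiv _ _ hf]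

theorem continuous_jet {N : ℕ} {f : (Fin N → ℝ) → ℝ} (hf : ContDiff ℝ 2 f) :
    Continuous (jet f) := by
  have hf' : ContDiff ℝ 1 (fderiv ℝ f) := hf.fderiv_right (by norm_num)
  have hhess : Continuous (fderiv ℝ (fderiv ℝ f)) := hf'.continuous_fderiv one_ne_zero
  rw [funext (jet_eq_fderiv hf)]
  exact hf.continuous.prodMk <| .prodMk
    (continuous_pi fun j => hf'.continuous.clm_apply continuous_const)
    (continuous_pi fun j => continuous_pi fun k =>
      (hhess.clm_apply continuous_const).clm_apply continuous_const)

/-- The 2-jets that a function has at its critical points of index `i` with value `≥ u`. -/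
def critJet (N : ℕ) (u : ℝ) (i : ℕ) : Set (ℝ × (Fin N → ℝ) × (Fin N → Fin N → ℝ)) :=
  {p | u ≤ p.1 ∧ p.2.1 = 0 ∧ negIdx (fun v => v ⬝ᵥ of p.2.2 *ᵥ v) = i}

theorem isLocallyClosed_preimage_singleton_of_lowerSemicontinuous {X : Type*}
    [TopologicalSpace X] {f : X → ℕ} (hf : LowerSemicontinuous f) (n : ℕ) :
    IsLocallyClosed (f ⁻¹' {n}) := by
  have hle (m : ℕ) : IsClosed (f ⁻¹' Set.Iic m) := hf.isClosed_preimage m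
  cases n with
  | zero =>
    convert (hle 0).isLocallyClosed using 2
    ext m
    simp
  | succ m =>
    convert (hle (m + 1)).isLocallyClosed.inter (hf.isOpen_preimage m).isLocallyClosed using 1
    ext x
    simp only [Set.mem_preimage, Set.mem_singleton_iff, Set.mem_inter_iff, Set.mem_Iic,
      Set.mem_Ioi]
    omega

theorem isLocallyClosed_critJet (N : ℕ) (u : ℝ) (i : ℕ) : IsLocallyClosed (critJet N u i) := by
  have hlsc : LowerSemicontinuous fun p : ℝ × (Fin N → ℝ) × (Fin N → Fin N → ℝ) =>
      negIdx fun v => v ⬝ᵥ of p.2.2 *ᵥ v := by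
    refine lowerSemicontinuous_negIdx ?_ fun p a v => ?_
    · simp only [dotProduct, mulVec, of_apply]
      fun_prop
    · simp only [mulVec_smul, dotProduct_smul, smul_dotProduct, smul_eq_mul]
      ring
  have hvalue : IsClosed {p : ℝ × (Fin N → ℝ) × (Fin N → Fin N → ℝ) | u ≤ p.1} :=
    isClosed_le continuous_const continuous_fst
  have hgrad : IsClosed {p : ℝ × (Fin N → ℝ) × (Fin N → Fin N → ℝ) | p.2.1 = 0} :=
    isClosed_eq (by fun_prop) continuous_const
  exact hvalue.isLocallyClosed.inter (hgrad.isLocallyClosed.inter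
    (isLocallyClosed_preimage_singleton_of_lowerSemicontinuous hlsc i))

theorem iteratedFDeriv_two_eq_dotProduct_mulVec {N : ℕ} (f : (Fin N → ℝ) → ℝ)
    (t v : Fin N → ℝ) :
    iteratedFDeriv ℝ 2 f t ![v, v] =
      v ⬝ᵥ of (fun j k => fderiv ℝ (fderiv ℝ f) t (Pi.single j 1) (Pi.single k 1)) *ᵥ v := by
  have hmatrix : of (fun j k => fderiv ℝ (fderiv ℝ f) t (Pi.single j 1) (Pi.single k 1)) =
      LinearMap.toMatrix₂' ℝ (fderiv ℝ (fderiv ℝ f) t).toBilinForm := by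
    ext j k
    simp
  rw [iteratedFDeriv_two_apply, hmatrix, ← toLinearMap₂'_apply', toLinearMap₂'_toMatrix']
  rfl

theorem mem_critSet_iff_jet_mem_critJet {N : ℕ} {f : (Fin N → ℝ) → ℝ} (hf : ContDiff ℝ 2 f)
    (D : Set (Fin N → ℝ)) (u : ℝ) (i : ℕ) (t : Fin N → ℝ) :
    t ∈ critSet f D u i ↔ t ∈ D ∧ jet f t ∈ critJet N u i := by
  have hgrad : fderiv ℝ f t = 0 ↔ (fun j => fderiv ℝ f t (Pi.single j 1)) = 0 := by
    refine ⟨fun h => by simp [h, Pi.zero_def], fun h => ?_⟩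
    exact ContinuousLinearMap.coe_injective (LinearMap.pi_ext' fun j =>
      LinearMap.ext_ring (congrFun h j))
  simp only [critSet, critJet, Set.mem_ofPred_eq, jet_eq_fderiv hf, hgrad, ge_iff_le,
    iteratedFDeriv_two_eq_dotProduct_mulVec]

end Jets

section CriticalPoints

variable {N : ℕ}

theorem critSet_eq_inter (f : (Fin N → ℝ) → ℝ) (D : Set (Fin N → ℝ)) (u : ℝ) (i : ℕ) :
    critSet f D u i = D ∩ critSet f Set.univ u i := by
  ext t
  simp only [critSet, Set.mem_ofPred_eq, Set.mem_inter_iff, Set.mem_univ, true_and]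

theorem critSet_comp_add_right (f : (Fin N → ℝ) → ℝ) (D : Set (Fin N → ℝ)) (u : ℝ) (i : ℕ)
    (s : Fin N → ℝ) :
    critSet (fun t => f (t + s)) ((· + s) ⁻¹' D) u i = (· + s) ⁻¹' critSet f D u i := by
  ext t
  simp only [critSet, Set.mem_ofPred_eq, Set.mem_preimage, fderiv_comp_add_right,
    iteratedFDeriv_comp_add_right]

theorem fderiv_comp_continuousLinearEquiv_eq_zero_iff {E F G : Type*} [NormedAddCommGroup E]
    [NormedSpace ℝ E] [NormedAddCommGroup F] [NormedSpace ℝ F] [NormedAddCommGroup G]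
    [NormedSpace ℝ G] (f : F → G) (L : E ≃L[ℝ] F) (t : E) :
    fderiv ℝ (f ∘ L) t = 0 ↔ fderiv ℝ f (L t) = 0 := by
  rw [L.comp_right_fderiv]
  refine ⟨fun h => ContinuousLinearMap.ext fun v => ?_, fun h => by rw [h]; rfl⟩
  simpa using DFunLike.congr_fun h (L.symm v)

theorem iteratedFDeriv_two_comp_continuousLinearEquiv {E F G : Type*} [NormedAddCommGroup E]
    [NormedSpace ℝ E] [NormedAddCommGroup F] [NormedSpace ℝ F] [NormedAddCommGroup G]
    [NormedSpace ℝ G] (f : F → G) (L : E ≃L[ℝ] F) (t v w : E) :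
    iteratedFDeriv ℝ 2 (f ∘ L) t ![v, w] = iteratedFDeriv ℝ 2 f (L t) ![L v, L w] := by
  have hcomp := L.iteratedFDerivWithin_comp_right (f := f) (s := Set.univ) uniqueDiffOn_univ
    (x := t) trivial 2
  simp only [Set.preimage_univ, iteratedFDerivWithin_univ] at hcomp
  rw [hcomp, ContinuousMultilinearMap.compContinuousLinearMap_apply]
  congr 1
  ext j
  fin_cases j <;> rfl

theorem critSet_comp_continuousLinearEquiv (f : (Fin N → ℝ) → ℝ)
    (L : (Fin N → ℝ) ≃L[ℝ] (Fin N → ℝ)) (D : Set (Fin N → ℝ)) (u : ℝ) (i : ℕ) :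
    critSet (f ∘ L) D u i = L ⁻¹' critSet f (L '' D) u i := by
  ext t
  have hindex := negIdx_comp (fun v => iteratedFDeriv ℝ 2 f (L t) ![v, v]) L.toLinearEquiv
  simp only [Function.comp_def, ContinuousLinearEquiv.coe_toLinearEquiv] at hindex
  simp only [critSet, Set.mem_ofPred_eq, Set.mem_preimage, L.injective.mem_set_image,
    fderiv_comp_continuousLinearEquiv_eq_zero_iff, iteratedFDeriv_two_comp_continuousLinearEquiv,
    Function.comp_apply, hindex]

theorem encard_critSet_comp_continuousLinearEquiv (f : (Fin N → ℝ) → ℝ)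
    (L : (Fin N → ℝ) ≃L[ℝ] (Fin N → ℝ)) (D : Set (Fin N → ℝ)) (u : ℝ) (i : ℕ) :
    (critSet (f ∘ L) D u i).encard = (critSet f (L '' D) u i).encard := by
  rw [critSet_comp_continuousLinearEquiv, Set.encard_preimage_of_bijective L.bijective]

/-- The measure `μ_i^f(·, u)` counting the critical points of `f` of index `i` with value `≥ u`. -/
noncomputable def critMeasure (f : (Fin N → ℝ) → ℝ) (u : ℝ) (i : ℕ) : Measure (Fin N → ℝ) :=
  Measure.count.restrict (critSet f Set.univ u i)

theorem critMeasure_apply (f : (Fin N → ℝ) → ℝ) (u : ℝ) (i : ℕ) {D : Set (Fin N → ℝ)}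
    (hD : MeasurableSet D) : critMeasure f u i D = (critSet f D u i).encard := by
  rw [critMeasure, Measure.restrict_apply hD, ← critSet_eq_inter, count_apply_eq_encard]

theorem critMeasure_comp_add_right (f : (Fin N → ℝ) → ℝ) (u : ℝ) (i : ℕ) (s : Fin N → ℝ) :
    critMeasure (fun t => f (t + s)) u i = (critMeasure f u i).map (-s + ·) := by
  refine Measure.ext fun D hD => ?_
  have hpre : D = (· + s) ⁻¹' ((-s + ·) ⁻¹' D) := by
    ext t
    simp
  rw [Measure.map_apply (measurable_const_add _) hD, critMeasure_apply _ _ _ hD,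
    critMeasure_apply _ _ _ (measurable_const_add _ hD)]
  conv_lhs => rw [hpre]
  rw [critSet_comp_add_right, Set.encard_preimage_of_bijective (AddGroup.addRight_bijective s)]

end CriticalPoints

section PathSpace

theorem measure_subtype_ext {α : Type*} [MeasurableSpace α] {p : α → Prop}
    {μ ν : Measure (Subtype p)} (h : μ.map Subtype.val = ν.map Subtype.val) : μ = ν := by
  refine Measure.ext ?_
  rintro _ ⟨B, hB, rfl⟩
  rw [← Measure.map_apply measurable_subtype_coe hB, h, Measure.map_apply measurable_subtype_coe hB]

/-- The space of `C²` paths, with the `σ`-algebra generated by the evaluations. For `0 < N` it is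
not a measurable set of functions, so the law of a field with almost surely `C²` paths does not
restrict to it: instead the field is modified on a null set to take its values here. -/
abbrev C2Path (N : ℕ) : Type :=
  {f : (Fin N → ℝ) → ℝ // ContDiff ℝ 2 f}

namespace C2Path

variable {N : ℕ}

/-- The path `f` moved by `g`, so that its critical points are moved by `g`. -/
def translate (g : Fin N → ℝ) (f : C2Path N) : C2Path N :=
  ⟨fun t => f.1 (t + -g), f.2.comp (contDiff_id.add contDiff_const)⟩

theorem measurable_translate (g : Fin N → ℝ) : Measurable (translate g) :=
  Measurable.subtype_mk <| measurable_pi_iff.2 fun t =>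
    (measurable_pi_apply (X := fun _ : Fin N → ℝ => ℝ) (t + -g)).comp measurable_subtype_coe

theorem critMeasure_translate (u : ℝ) (i : ℕ) (g : Fin N → ℝ) (f : C2Path N) :
    critMeasure (translate g f).1 u i = (critMeasure f.1 u i).map (g + ·) := by
  simpa [translate] using critMeasure_comp_add_right f.1 u i (-g)

theorem measurable_critMeasure_apply {K : Set (Fin N → ℝ)} (hK : IsCompact K) (u : ℝ) (i : ℕ) :
    Measurable fun f : C2Path N => critMeasure f.1 u i K := by
  have hcount : Measurable fun f : C2Path N => {t ∈ K | jet f.1 t ∈ critJet N u i}.encard :=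
    measurable_encard_setOf_mem_isLocallyClosed
      (fun t => (measurable_jet t).comp measurable_subtype_coe) (fun f => continuous_jet f.2) hK
      (isLocallyClosed_critJet N u i)
  convert (measurable_from_top (f := ENat.toENNReal)).comp hcount using 2 with f
  rw [critMeasure_apply _ _ _ hK.measurableSet, Function.comp_apply]
  congr 2
  ext t
  exact mem_critSet_iff_jet_mem_critJet f.2 K u i t

variable {Ω : Type*} [MeasurableSpace Ω] {P : Measure Ω} {Z : Ω → (Fin N → ℝ) → ℝ}

theorem exists_measurable_ae_eq (hZ : AEMeasurable Z P) (hC2 : ∀ᵐ ω ∂P, ContDiff ℝ 2 (Z ω)) :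
    ∃ Y : Ω → C2Path N, Measurable Y ∧ ∀ᵐ ω ∂P, (Y ω).1 = Z ω := by
  have hne : {f : (Fin N → ℝ) → ℝ | ContDiff ℝ 2 f}.Nonempty :=
    ⟨0, show ContDiff ℝ 2 (0 : (Fin N → ℝ) → ℝ) from contDiff_const⟩
  obtain ⟨Y, hY, hYC2, hYZ⟩ := hZ.exists_ae_eq_range_subset hC2 hne
  exact ⟨fun ω => ⟨Y ω, hYC2 ⟨ω, rfl⟩⟩, hY.subtype_mk, hYZ.symm⟩

theorem measurePreserving_translate
    (hstat : ∀ s : Fin N → ℝ, P.map (fun ω t => Z ω (t + s)) = P.map Z)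
    {Y : Ω → C2Path N} (hY : Measurable Y) (hYZ : ∀ᵐ ω ∂P, (Y ω).1 = Z ω) (g : Fin N → ℝ) :
    MeasurePreserving (translate g) (P.map Y) (P.map Y) := by
  refine ⟨measurable_translate g, measure_subtype_ext ?_⟩
  rw [Measure.map_map (measurable_translate g) hY,
    Measure.map_map measurable_subtype_coe ((measurable_translate g).comp hY),
    Measure.map_map measurable_subtype_coe hY]
  calc P.map (Subtype.val ∘ translate g ∘ Y) = P.map (fun ω t => Z ω (t + -g)) :=
        Measure.map_congr (hYZ.mono fun ω hω => by simp [translate, hω])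
    _ = P.map Z := hstat (-g)
    _ = P.map (Subtype.val ∘ Y) := Measure.map_congr (hYZ.mono fun ω hω => hω.symm)

theorem lintegral_encard_critSet {Y : Ω → C2Path N} (hY : Measurable Y)
    (hYZ : ∀ᵐ ω ∂P, (Y ω).1 = Z ω) {u : ℝ} {i : ℕ} {D : Set (Fin N → ℝ)} (hD : MeasurableSet D)
    (hDm : AEMeasurable (fun f : C2Path N => critMeasure f.1 u i D) (P.map Y)) :
    ∫⁻ ω, (critSet (Z ω) D u i).encard ∂P = ∫⁻ f, critMeasure f.1 u i D ∂(P.map Y) := by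
  rw [lintegral_map' hDm hY.aemeasurable]
  refine lintegral_congr_ae (hYZ.mono fun ω hω => ?_)
  simp only [critMeasure_apply _ _ _ hD, hω]

end C2Path

end PathSpace

theorem nonempty_interior_Icc_zero_one (ι : Type*) [Finite ι] :
    (interior (Set.Icc (0 : ι → ℝ) 1)).Nonempty := by
  rw [← Set.pi_univ_Icc, interior_pi_set Set.finite_univ]
  exact ⟨fun _ => 1 / 2, fun i _ => by norm_num⟩

theorem exists_continuousLinearEquiv_coe_eq_toLin' {n : Type*} [Fintype n] [DecidableEq n]
    {A : Matrix n n ℝ} (hA : IsUnit A.det) :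
    ∃ L : (n → ℝ) ≃L[ℝ] (n → ℝ), (L : (n → ℝ) →ₗ[ℝ] (n → ℝ)) = A.toLin' := by
  have hdet : IsUnit (LinearMap.det A.toLin') := by rwa [LinearMap.det_toLin']
  exact ⟨(LinearMap.equivOfIsUnitDet hdet).toContinuousLinearEquiv,
    LinearMap.coe_equivOfIsUnitDet hdet⟩

theorem expected_critical_points_anisotropic_general {N : ℕ} {Ω : Type*} [MeasurableSpace Ω]
    {P : Measure Ω} {Z : Ω → (Fin N → ℝ) → ℝ} (hZ : AEMeasurable Z P)
    (hstat : ∀ s : Fin N → ℝ, P.map (fun ω t => Z ω (t + s)) = P.map Z)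
    (hC2 : ∀ᵐ ω ∂P, ContDiff ℝ 2 (Z ω)) {u : ℝ} {i : ℕ} {V : Set (Fin N → ℝ)}
    (hV : IsCompact V) (hVint : (interior V).Nonempty)
    (hfin : ∫⁻ ω, (critSet (Z ω) V u i).encard ∂P ≠ ⊤)
    {A : Matrix (Fin N) (Fin N) ℝ} (hA : IsUnit A.det)
    {D : Set (Fin N → ℝ)} (hD : MeasurableSet D) :
    ∫⁻ ω, (critSet (fun t => Z ω (A *ᵥ t)) D u i).encard ∂P =
      ENNReal.ofReal |A.det| * ∫⁻ ω, (critSet (Z ω) D u i).encard ∂P := by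
  obtain ⟨L, hL⟩ := exists_continuousLinearEquiv_coe_eq_toLin' hA
  have hXL (ω : Ω) : (fun t => Z ω (A *ᵥ t)) = Z ω ∘ L :=
    funext fun t => congrArg (Z ω) (LinearMap.congr_fun hL t).symm
  obtain ⟨Y, hY, hYZ⟩ := C2Path.exists_measurable_ae_eq hZ hC2
  have hτ := C2Path.measurePreserving_translate hstat hY hYZ
  have hM := C2Path.critMeasure_translate (N := N) u i
  have hMK (K : Set (Fin N → ℝ)) (hK : IsCompact K) :=
    C2Path.measurable_critMeasure_apply hK u i
  rw [C2Path.lintegral_encard_critSet hY hYZ hV.measurableSet (hMK V hV).aemeasurable] at hfin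
  have hMm := aemeasurable_of_equivariant hτ hM hMK hV hVint hfin
  have hcount (B : Set (Fin N → ℝ)) (hB : MeasurableSet B) :=
    C2Path.lintegral_encard_critSet hY hYZ hB ((Measure.measurable_coe hB).comp_aemeasurable hMm)
  have hLD : MeasurableSet (L '' D) := L.toHomeomorph.measurableEmbedding.measurableSet_image.2 hD
  simp only [hXL, encard_critSet_comp_continuousLinearEquiv]
  rw [hcount _ hLD, hcount D hD, ← LinearMap.det_toLin' A, ← hL]
  exact lintegral_measure_image_of_equivariant hτ hM hMm hV.measurableSet hVint hfin L hD

/-- for a stationary a.s. C² random field `Z` with finite expected number of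
critical points, `A` invertible and `X(t) = Z(At)`, one has
`E[μ_i^X(D,u)] = |det A| · E[μ_i^Z(D,u)]` for every measurable bounded `D`. -/
theorem expected_critical_points_anisotropic {N : ℕ}
    {Ω : Type*} [MeasurableSpace Ω] (P : Measure Ω) [IsProbabilityMeasure P]
    (Z : Ω → (Fin N → ℝ) → ℝ)
    (hmeas : Measurable fun p : Ω × (Fin N → ℝ) => Z p.1 p.2)
    (hstat : ∀ s : Fin N → ℝ,
      Measure.map (fun ω => (fun t => Z ω (t + s))) P = Measure.map (fun ω => Z ω) P)
    (hC2 : ∀ᵐ ω ∂P, ContDiff ℝ 2 (Z ω)) (u : ℝ) (i : ℕ)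
    (hfin : ∫⁻ ω, (critSet (Z ω) (Set.Icc 0 1) u i).encard ∂P ≠ ⊤)
    (A : Matrix (Fin N) (Fin N) ℝ) (hA : IsUnit A.det)
    (X : Ω → (Fin N → ℝ) → ℝ) (hX : ∀ ω t, X ω t = Z ω (A.mulVec t))
    (D : Set (Fin N → ℝ)) (hD : MeasurableSet D) (hDb : Bornology.IsBounded D) :
    ∫⁻ ω, (critSet (X ω) D u i).encard ∂P =
      ENNReal.ofReal |A.det| * ∫⁻ ω, (critSet (Z ω) D u i).encard ∂P := by
  obtain rfl : X = fun ω t => Z ω (A *ᵥ t) := funext₂ hX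
  have hZ : Measurable Z := measurable_pi_iff.2 fun t => hmeas.of_uncurry_right (y := t)
  exact expected_critical_points_anisotropic_general hZ.aemeasurable hstat hC2 isCompact_Icc
    (nonempty_interior_Icc_zero_one _) hfin hA hD
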